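/- Let α ∈ (0,1), let x : [0,∞) → ℝ be continuously differentiable, and let u : [0,∞) → ℝ be continuous. If (1/(1−α)) ∫_0^t x′(τ) · exp((α/(α−1))·(t−τ)) dτ = u(t) for all t ≥ 0, then x(t) = x(0) + (1−α)·(u(t) − u(0)) + α·∫_0^t u(τ) dτ for all t ≥ 0. In particular, if u ≡ 0 then x(t) = x(0) for all t ≥ 0. -/

import Mathlib

open MeasureTheory intervalIntegral Real Set Filter

/-!
Write `c = α / (α - 1)` and `J t = ∫_a^t e^{c (t - τ)} x'(τ) dτ`, so that the Caputo–Fabrizio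
derivative of `x` is `J / (1 - α)`. Exchanging the order of integration over the triangle
`a ≤ τ ≤ s ≤ t` gives `c ∫_a^t J = J t - ∫_a^t x'`. Since `α / (1 - α) = -c`, the terms `J t` cancel
in `(1 - α) u(t) + α ∫_a^t u` for `u = J / (1 - α)`, leaving `∫_a^t x' = x t - x a`. The term
`(1 - α) u(a)` is zero, as the derivative at the base point is an integral over `[a, a]`.
-/

section

variable {E : Type*} [NormedAddCommGroup E] [NormedSpace ℝ E] {α a b c t : ℝ}

theorem intervalIntegral_intervalIntegral_swap_triangle {F : ℝ → ℝ → E} (hab : a ≤ b)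
    (hF : IntegrableOn F.uncurry ({p | p.2 ≤ p.1} ∩ Ioc a b ×ˢ Ioc a b)) :
    ∫ s in a..b, ∫ τ in a..s, F s τ = ∫ τ in a..b, ∫ s in τ..b, F s τ := by
  have hT : MeasurableSet {p : ℝ × ℝ | p.2 ≤ p.1} := measurableSet_le measurable_snd measurable_fst
  have hind : IntegrableOn (fun s τ => (Iic s).indicator (F s) τ).uncurry
      (uIoc a b ×ˢ uIoc a b) := by
    rw [uIoc_of_le hab]
    exact (integrable_indicator_iff hT).2 (by rwa [IntegrableOn, Measure.restrict_restrict hT])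
  calc ∫ s in a..b, ∫ τ in a..s, F s τ
      = ∫ s in a..b, ∫ τ in a..b, (Iic s).indicator (F s) τ := by
        refine integral_congr fun s hs => ?_
        rw [uIcc_of_le hab] at hs
        exact (integral_indicator (f := F s) hs).symm
    _ = ∫ τ in a..b, ∫ s in a..b, (Iic s).indicator (F s) τ :=
        intervalIntegral_intervalIntegral_swap hind
    _ = ∫ τ in a..b, ∫ s in τ..b, F s τ := by
        refine integral_congr_Ioo_of_le hab fun τ hτ => ?_
        have hset : Ioc a b ∩ Ici τ = Icc τ b := by
          ext s
          exact ⟨fun hs => ⟨hs.2, hs.1.2⟩, fun hs => ⟨⟨hτ.1.trans_le hs.1, hs.2⟩, hs.1⟩⟩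
        calc ∫ s in a..b, (Iic s).indicator (F s) τ
            = ∫ s in Ioc a b, (Ici τ).indicator (F · τ) s := integral_of_le hab
          _ = ∫ s in τ..b, F s τ := by
            rw [setIntegral_indicator measurableSet_Ici, hset, integral_Icc_eq_integral_Ioc,
              integral_of_le hτ.2.le]

theorem integrableOn_comp_sub_smul {K : ℝ → ℝ} {f : ℝ → E} {S T : Set ℝ} (hK : Continuous K)
    (hS : IsCompact S) (hT : IsCompact T) (hf : IntegrableOn f T) :
    IntegrableOn (fun p : ℝ × ℝ => K (p.1 - p.2) • f p.2) (S ×ˢ T) := by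
  have : IsFiniteMeasure (volume.restrict S) := isFiniteMeasure_restrict.2 hS.measure_ne_top
  have hf' : IntegrableOn (fun p : ℝ × ℝ => f p.2) (S ×ˢ T) := by
    rw [IntegrableOn, Measure.volume_eq_prod, ← Measure.prod_restrict]
    exact hf.comp_snd _
  exact hf'.continuousOn_smul (by fun_prop) (hS.prod hT)

theorem integral_integral_deriv_comp_sub_smul [CompleteSpace E] {k : ℝ → ℝ} {f : ℝ → E}
    (hab : a ≤ b) (hk : ContDiff ℝ 1 k) (hf : IntegrableOn f (Icc a b)) :
    ∫ s in a..b, ∫ τ in a..s, deriv k (s - τ) • f τ = ∫ τ in a..b, (k (b - τ) - k 0) • f τ := by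
  have hk' : Continuous (deriv k) := hk.continuous_deriv_one
  rw [intervalIntegral_intervalIntegral_swap_triangle (F := fun s τ => deriv k (s - τ) • f τ) hab
    ((integrableOn_comp_sub_smul hk' isCompact_Icc isCompact_Icc hf).mono_set
      (inter_subset_right.trans (prod_mono Ioc_subset_Icc_self Ioc_subset_Icc_self)))]
  congr! 2 with τ
  rw [intervalIntegral.integral_smul_const, integral_comp_sub_right (deriv k), sub_self,
    integral_deriv_eq_sub (fun r _ => hk.differentiable one_ne_zero r)
      (hk'.intervalIntegrable _ _)]

theorem smul_integral_integral_exp_smul [CompleteSpace E] {f : ℝ → E} (hab : a ≤ b)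
    (hf : IntegrableOn f (Icc a b)) :
    c • ∫ s in a..b, ∫ τ in a..s, exp (c * (s - τ)) • f τ =
      (∫ τ in a..b, exp (c * (b - τ)) • f τ) - ∫ τ in a..b, f τ := by
  have hderiv : deriv (fun r => exp (c * r)) = fun r => c * exp (c * r) := by
    ext r
    rw [deriv_comp_mul_left, Real.deriv_exp, smul_eq_mul]
  have hf' : IntervalIntegrable f volume a b :=
    (intervalIntegrable_iff_integrableOn_Icc_of_le hab).2 hf
  calc c • ∫ s in a..b, ∫ τ in a..s, exp (c * (s - τ)) • f τ
      = ∫ s in a..b, ∫ τ in a..s, deriv (fun r => exp (c * r)) (s - τ) • f τ := by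
        simp only [hderiv, mul_smul, intervalIntegral.integral_smul]
    _ = ∫ τ in a..b, (exp (c * (b - τ)) - exp (c * 0)) • f τ :=
        integral_integral_deriv_comp_sub_smul hab (by fun_prop) hf
    _ = (∫ τ in a..b, exp (c * (b - τ)) • f τ) - ∫ τ in a..b, f τ := by
        simp only [mul_zero, exp_zero, sub_smul, one_smul]
        exact integral_sub (hf'.continuousOn_smul (by fun_prop)) hf'

/-- The Caputo–Fabrizio fractional derivative of order `α` based at `a`, with normalization
`M(α) = 1`. One-sided derivatives at `a` make it meaningful for `x` defined on `[a, ∞)` only; at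
`α = 1` it takes the junk value `0`. -/
noncomputable def caputoFabrizioDeriv (α a : ℝ) (x : ℝ → E) (t : ℝ) : E :=
  (1 - α)⁻¹ • ∫ τ in a..t, exp (α / (α - 1) * (t - τ)) • derivWithin x (Ici a) τ

/-- The Caputo–Fabrizio fractional integral of order `α` based at `a`, with normalization
`M(α) = 1`. -/
noncomputable def caputoFabrizioIntegral (α a : ℝ) (u : ℝ → E) (t : ℝ) : E :=
  (1 - α) • u t + α • ∫ τ in a..t, u τ

theorem caputoFabrizioDeriv_self (x : ℝ → E) : caputoFabrizioDeriv α a x a = 0 := by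
  simp [caputoFabrizioDeriv]

theorem caputoFabrizioIntegral_congr {u v : ℝ → E} (hat : a ≤ t) (huv : EqOn u v (Icc a t)) :
    caputoFabrizioIntegral α a u t = caputoFabrizioIntegral α a v t := by
  rw [caputoFabrizioIntegral, caputoFabrizioIntegral, huv (right_mem_Icc.2 hat),
    integral_congr (uIcc_of_le hat ▸ huv)]

theorem caputoFabrizioIntegral_zero : caputoFabrizioIntegral α a (0 : ℝ → E) t = 0 := by
  simp [caputoFabrizioIntegral]

theorem integral_derivWithin_Ici_eq_sub [CompleteSpace E] {x : ℝ → E} (hab : a ≤ b)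
    (hx : ContinuousOn x (Icc a b)) (hdx : DifferentiableOn ℝ x (Ioo a b))
    (hint : IntegrableOn (derivWithin x (Ici a)) (Icc a b)) :
    ∫ τ in a..b, derivWithin x (Ici a) τ = x b - x a := by
  refine integral_eq_sub_of_hasDerivAt_of_le hab hx (fun τ hτ => ?_)
    ((intervalIntegrable_iff_integrableOn_Icc_of_le hab).2 hint)
  rw [derivWithin_of_mem_nhds (Ici_mem_nhds hτ.1)]
  exact (hdx.differentiableAt (Ioo_mem_nhds hτ.1 hτ.2)).hasDerivAt

theorem caputoFabrizioIntegral_caputoFabrizioDeriv [CompleteSpace E] {x : ℝ → E} (hα : α ≠ 1)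
    (hat : a ≤ t) (hx : ContinuousOn x (Icc a t)) (hdx : DifferentiableOn ℝ x (Ioo a t))
    (hint : IntegrableOn (derivWithin x (Ici a)) (Icc a t)) :
    caputoFabrizioIntegral α a (caputoFabrizioDeriv α a x) t = x t - x a := by
  have hα₀ : 1 - α ≠ 0 := sub_ne_zero.2 hα.symm
  have hc : α * (1 - α)⁻¹ = -(α / (α - 1)) := by
    rw [← div_eq_mul_inv, ← div_neg, neg_sub]
  simp only [caputoFabrizioIntegral, caputoFabrizioDeriv, intervalIntegral.integral_smul]
  rw [smul_inv_smul₀ hα₀, smul_smul, hc, neg_smul, smul_integral_integral_exp_smul hat hint,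
    integral_derivWithin_Ici_eq_sub hat hx hdx hint]
  abel

theorem cf_eq_u_implies_integral_form_general [CompleteSpace E] {x u : ℝ → E} (hα : α ≠ 1)
    (hx : ContinuousOn x (Ici a)) (hdx : DifferentiableOn ℝ x (Ioi a))
    (hint : LocallyIntegrableOn (derivWithin x (Ici a)) (Ici a))
    (h : ∀ t, a ≤ t → caputoFabrizioDeriv α a x t = u t) :
    (∀ t, a ≤ t → x t = x a + (1 - α) • (u t - u a) + α • ∫ τ in a..t, u τ) ∧
      ((∀ t, a ≤ t → u t = 0) → ∀ t, a ≤ t → x t = x a) := by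
  have integral_form (t : ℝ) (ht : a ≤ t) : caputoFabrizioIntegral α a u t = x t - x a := by
    rw [← caputoFabrizioIntegral_caputoFabrizioDeriv hα ht (hx.mono Icc_subset_Ici_self)
      (hdx.mono Ioo_subset_Ioi_self)
      (hint.integrableOn_compact_subset Icc_subset_Ici_self isCompact_Icc)]
    exact (caputoFabrizioIntegral_congr ht fun s hs => h s hs.1).symm
  refine ⟨fun t ht => ?_, fun hu t ht => ?_⟩
  · have hua : u a = 0 := by rw [← h a le_rfl, caputoFabrizioDeriv_self]
    rw [hua, sub_zero, add_assoc, ← caputoFabrizioIntegral, integral_form t ht, add_sub_cancel]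
  · rw [← sub_eq_zero, ← integral_form t ht,
      caputoFabrizioIntegral_congr (v := 0) ht (fun s hs => hu s hs.1),
        caputoFabrizioIntegral_zero]

end

/-- If `x` is `C¹` on `[0,∞)`, `u` is continuous on `[0,∞)`, and the Caputo–Fabrizio
fractional derivative of `x` equals `u(t)` for all `t ≥ 0`, then
`x(t) = x(0) + (1-α)(u(t) - u(0)) + α ∫_0^t u(τ) dτ` for all `t ≥ 0`.
In particular, if `u ≡ 0` on `[0,∞)` then `x` is constant there. -/
theorem cf_eq_u_implies_integral_form (α : ℝ) (hα : α ∈ Set.Ioo (0 : ℝ) 1) (x u : ℝ → ℝ)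
    (hx : ContDiffOn ℝ 1 x (Set.Ici 0))
    (hu : ContinuousOn u (Set.Ici 0))
    (h : ∀ t : ℝ, 0 ≤ t →
      (1 / (1 - α)) *
        (∫ τ in (0 : ℝ)..t, derivWithin x (Set.Ici 0) τ * Real.exp ((α / (α - 1)) * (t - τ)))
      = u t) :
    (∀ t : ℝ, 0 ≤ t →
      x t = x 0 + (1 - α) * (u t - u 0) + α * ∫ τ in (0 : ℝ)..t, u τ)
    ∧ ((∀ t : ℝ, 0 ≤ t → u t = 0) → ∀ t : ℝ, 0 ≤ t → x t = x 0) :=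
  cf_eq_u_implies_integral_form_general hα.2.ne hx.continuousOn
    ((hx.differentiableOn one_ne_zero).mono Ioi_subset_Ici_self)
    ((hx.continuousOn_derivWithin (uniqueDiffOn_Ici 0) le_rfl).locallyIntegrableOn
      measurableSet_Ici)
    fun t ht => by simpa [caputoFabrizioDeriv, mul_comm] using h t ht
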